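/- arXiv:2103.02079 — 4 statements merged into one kernel-verified Lean document; each statement's English description precedes it below -/
import Mathlib

section
/- Assume the dataset D has ℓ¹ diameter at most 1. Then for every z ∈ ℝ^d, the x₀-containing part p₁(z) = (1/C(n,k)) · Σ_{S' ⊆ D', |S'| = k−1} φ_σ(z − (1/k)(x₀ + Σ_{x ∈ S'} x)) of the mixup-plus-noise density of D satisfies the two-sided bound exp(−1/(kσ)) · (k/n) · q(z) ≤ p₁(z) ≤ exp(1/(kσ)) · (k/n) · q(z), where q is the mixup-plus-noise output density of D' = D \ {x₀}. -/
open Finset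

/-- The d-dimensional isotropic Laplacian density with scale σ. -/
noncomputable def laplacianDensity (d : ℕ) (σ : ℝ) (η : Fin d → ℝ) : ℝ :=
  ((2 * σ) ^ d)⁻¹ * Real.exp (-(∑ i, |η i|) / σ)

/-- The mixup-plus-noise output density of a finite dataset `P`. -/
noncomputable def mixupDensity (d : ℕ) (σ : ℝ) (k : ℕ) (P : Finset (Fin d → ℝ))
    (z : Fin d → ℝ) : ℝ :=
  ((P.card.choose k : ℝ))⁻¹ *
    ∑ S ∈ P.powersetCard k, laplacianDensity d σ (z - (k : ℝ)⁻¹ • ∑ x ∈ S, x)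

/-!
A uniform `k`-subset of `D'` is obtained from a uniform `(k - 1)`-subset `S'` by inserting a uniform
point `y` of `D' \ S'`, so `q` averages the Laplacian densities of the means of `insert y S'`.
Likewise `p₁` is `k / n` times the average, over `S'`, of the densities of the means of `S'`
together with `x₀`. Exchanging `x₀` for `y` moves a mean by at most `1 / k` in `ℓ¹`, which changes
the Laplacian density by a factor of at most `exp (1 / (kσ))`.
-/

open scoped BigOperators

section SubsetAverages

variable {α M : Type*} [DecidableEq α] [AddCommMonoid M]

theorem sum_powersetCard_sum_sdiff_insert (P : Finset α) (k : ℕ) (g : Finset α → M) :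
    ∑ S ∈ P.powersetCard k, ∑ y ∈ P \ S, g (insert y S)
      = (k + 1) • ∑ T ∈ P.powersetCard (k + 1), g T := by
  calc
    ∑ S ∈ P.powersetCard k, ∑ y ∈ P \ S, g (insert y S)
        = ∑ T ∈ P.powersetCard (k + 1), ∑ _y ∈ T, g T := by
      rw [sum_sigma', sum_sigma']
      refine sum_bij' (fun a _ ↦ ⟨insert a.2 a.1, a.2⟩) (fun b _ ↦ ⟨b.1.erase b.2, b.2⟩)
        ?_ ?_ ?_ ?_ ?_ <;> grind [erase_insert, insert_erase]
    _ = (k + 1) • ∑ T ∈ P.powersetCard (k + 1), g T := by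
      rw [smul_sum]
      refine sum_congr rfl fun T hT ↦ ?_
      rw [sum_const, (mem_powersetCard.mp hT).2]

variable [Module ℚ≥0 M]

theorem expect_powersetCard_expect_sdiff_insert (P : Finset α) (k : ℕ) (g : Finset α → M) :
    𝔼 S ∈ P.powersetCard k, 𝔼 y ∈ P \ S, g (insert y S) = 𝔼 T ∈ P.powersetCard (k + 1), g T := by
  have card_sdiff : ∀ S ∈ P.powersetCard k, #(P \ S) = #P - k := fun S hS ↦ by
    obtain ⟨hSP, hSk⟩ := mem_powersetCard.mp hS
    rw [card_sdiff_of_subset hSP, hSk]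
  have choose_succ : ((#P).choose (k + 1) : ℚ≥0) * (k + 1 : ℕ) = (#P).choose k * (#P - k : ℕ) :=
    mod_cast Nat.choose_succ_right_eq #P k
  calc
    𝔼 S ∈ P.powersetCard k, 𝔼 y ∈ P \ S, g (insert y S)
        = ((#P).choose k : ℚ≥0)⁻¹ • ∑ S ∈ P.powersetCard k,
            ((#P - k : ℕ) : ℚ≥0)⁻¹ • ∑ y ∈ P \ S, g (insert y S) := by
      rw [expect, card_powersetCard]
      congr 1
      exact sum_congr rfl fun S hS ↦ by rw [expect, card_sdiff S hS]
    _ = (((#P).choose k * (#P - k : ℕ) : ℚ≥0)⁻¹ * (k + 1 : ℕ)) •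
          ∑ T ∈ P.powersetCard (k + 1), g T := by
      rw [← smul_sum, sum_powersetCard_sum_sdiff_insert, ← Nat.cast_smul_eq_nsmul ℚ≥0, smul_smul,
        smul_smul, mul_inv, mul_assoc]
    _ = 𝔼 T ∈ P.powersetCard (k + 1), g T := by
      rw [← choose_succ, mul_inv, inv_mul_cancel_right₀ (by positivity), expect, card_powersetCard]

variable [PartialOrder M] [IsOrderedAddMonoid M] [PosSMulMono ℚ≥0 M]
  {P : Finset α} {k : ℕ} {f g : Finset α → M}

theorem expect_powersetCard_le_expect_powersetCard_succ (hk : k < #P)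
    (h : ∀ S ∈ P.powersetCard k, ∀ y ∈ P \ S, f S ≤ g (insert y S)) :
    𝔼 S ∈ P.powersetCard k, f S ≤ 𝔼 T ∈ P.powersetCard (k + 1), g T := by
  rw [← expect_powersetCard_expect_sdiff_insert]
  refine expect_le_expect fun S hS ↦ le_expect ?_ (h S hS)
  exact sdiff_nonempty_of_card_lt_card ((mem_powersetCard.mp hS).2.trans_lt hk)

theorem expect_powersetCard_succ_le_expect_powersetCard (hk : k < #P)
    (h : ∀ S ∈ P.powersetCard k, ∀ y ∈ P \ S, g (insert y S) ≤ f S) :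
    𝔼 T ∈ P.powersetCard (k + 1), g T ≤ 𝔼 S ∈ P.powersetCard k, f S := by
  rw [← expect_powersetCard_expect_sdiff_insert]
  refine expect_le_expect fun S hS ↦ expect_le ?_ (h S hS)
  exact sdiff_nonempty_of_card_lt_card ((mem_powersetCard.mp hS).2.trans_lt hk)

end SubsetAverages

theorem inv_choose_succ_mul_sum_powersetCard {α K : Type*} [Semifield K] [CharZero K]
    (P : Finset α) (k : ℕ) (f : Finset α → K) :
    ((#P + 1).choose (k + 1) : K)⁻¹ * ∑ S ∈ P.powersetCard k, f S
      = ((k + 1 : ℕ) : K) / (#P + 1 : ℕ) * 𝔼 S ∈ P.powersetCard k, f S := by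
  have choose_succ : ((#P + 1 : ℕ) : K) * (#P).choose k = (#P + 1).choose (k + 1) * (k + 1 : ℕ) :=
    mod_cast Nat.add_one_mul_choose_eq #P k
  have hk : ((k + 1 : ℕ) : K) ≠ 0 := Nat.cast_ne_zero.mpr k.succ_ne_zero
  rw [expect_eq_sum_div_card, card_powersetCard, div_mul_div_comm, choose_succ,
    mul_comm ((#P + 1).choose (k + 1) : K), mul_div_mul_left _ _ hk, div_eq_inv_mul]

section Laplacian

variable {d : ℕ} {σ : ℝ}

theorem laplacianDensity_nonneg (hσ : 0 ≤ σ) (u : Fin d → ℝ) : 0 ≤ laplacianDensity d σ u := by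
  rw [laplacianDensity]
  positivity

theorem laplacianDensity_le_exp_mul_laplacianDensity (hσ : 0 < σ) (u v : Fin d → ℝ) :
    laplacianDensity d σ u ≤ Real.exp ((∑ i, |u i - v i|) / σ) * laplacianDensity d σ v := by
  have triangle : ∑ i, |v i| ≤ ∑ i, |u i - v i| + ∑ i, |u i| := by
    rw [← sum_add_distrib]
    gcongr with i
    rw [← sub_le_iff_le_add, abs_sub_comm]
    exact abs_sub_abs_le_abs_sub (v i) (u i)
  rw [laplacianDensity, laplacianDensity, mul_left_comm, ← Real.exp_add, ← add_div]
  gcongr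
  linarith

theorem laplacianDensity_sub_smul_add_le (hσ : 0 < σ) {a r : ℝ} (ha : 0 ≤ a)
    {x y : Fin d → ℝ} (hxy : ∑ i, |x i - y i| ≤ r) (z s : Fin d → ℝ) :
    laplacianDensity d σ (z - a • (x + s))
      ≤ Real.exp (a * r / σ) * laplacianDensity d σ (z - a • (y + s)) := by
  have shift : ∀ i, (z - a • (x + s)) i - (z - a • (y + s)) i = -(a * (x i - y i)) := fun i ↦ by
    simp only [Pi.sub_apply, Pi.smul_apply, Pi.add_apply, smul_eq_mul]
    ring
  refine (laplacianDensity_le_exp_mul_laplacianDensity hσ _ (z - a • (y + s))).trans ?_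
  simp only [shift, abs_neg, abs_mul, abs_of_nonneg ha, ← mul_sum]
  have := laplacianDensity_nonneg hσ.le (z - a • (y + s))
  gcongr

theorem mixupDensity_eq_expect (σ : ℝ) (k : ℕ) (P : Finset (Fin d → ℝ)) (z : Fin d → ℝ) :
    mixupDensity d σ k P z
      = 𝔼 S ∈ P.powersetCard k, laplacianDensity d σ (z - (k : ℝ)⁻¹ • ∑ x ∈ S, x) := by
  rw [mixupDensity, expect_eq_sum_div_card, card_powersetCard, inv_mul_eq_div]

variable {P : Finset (Fin d → ℝ)} {x₀ : Fin d → ℝ} {a r : ℝ} {k : ℕ}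

theorem expect_laplacianDensity_add_le (hσ : 0 < σ) (ha : 0 ≤ a)
    (hx₀ : ∀ y ∈ P, ∑ i, |x₀ i - y i| ≤ r) (hk : k < #P) (z : Fin d → ℝ) :
    𝔼 S ∈ P.powersetCard k, laplacianDensity d σ (z - a • (x₀ + ∑ x ∈ S, x))
      ≤ Real.exp (a * r / σ) *
          𝔼 T ∈ P.powersetCard (k + 1), laplacianDensity d σ (z - a • ∑ x ∈ T, x) := by
  rw [mul_expect]
  refine expect_powersetCard_le_expect_powersetCard_succ hk fun S _ y hy ↦ ?_
  obtain ⟨hyP, hyS⟩ := mem_sdiff.mp hy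
  rw [sum_insert hyS]
  exact laplacianDensity_sub_smul_add_le hσ ha (hx₀ y hyP) z _

theorem expect_laplacianDensity_le_add (hσ : 0 < σ) (ha : 0 ≤ a)
    (hx₀ : ∀ y ∈ P, ∑ i, |x₀ i - y i| ≤ r) (hk : k < #P) (z : Fin d → ℝ) :
    𝔼 T ∈ P.powersetCard (k + 1), laplacianDensity d σ (z - a • ∑ x ∈ T, x)
      ≤ Real.exp (a * r / σ) *
          𝔼 S ∈ P.powersetCard k, laplacianDensity d σ (z - a • (x₀ + ∑ x ∈ S, x)) := by
  rw [mul_expect]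
  refine expect_powersetCard_succ_le_expect_powersetCard hk fun S _ y hy ↦ ?_
  obtain ⟨hyP, hyS⟩ := mem_sdiff.mp hy
  rw [sum_insert hyS]
  refine laplacianDensity_sub_smul_add_le hσ ha ?_ z _
  simpa only [abs_sub_comm] using hx₀ y hyP

end Laplacian

theorem mixup_density_x0_part_two_sided_bound_general
    {d : ℕ} {σ : ℝ} (hσ : 0 < σ) {P : Finset (Fin d → ℝ)} {n : ℕ} (hn : #P + 1 = n)
    {x₀ : Fin d → ℝ} {r : ℝ} (hx₀ : ∀ y ∈ P, ∑ i, |x₀ i - y i| ≤ r)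
    {k : ℕ} (hk1 : 1 ≤ k) (hkn : k ≤ n - 1) (z : Fin d → ℝ) :
    Real.exp (-(r / (k * σ))) * ((k : ℝ) / n) * mixupDensity d σ k P z
        ≤ ((n.choose k : ℝ))⁻¹ *
            ∑ S' ∈ P.powersetCard (k - 1),
              laplacianDensity d σ (z - (k : ℝ)⁻¹ • (x₀ + ∑ x ∈ S', x)) ∧
    ((n.choose k : ℝ))⁻¹ *
        ∑ S' ∈ P.powersetCard (k - 1),
          laplacianDensity d σ (z - (k : ℝ)⁻¹ • (x₀ + ∑ x ∈ S', x))
      ≤ Real.exp (r / (k * σ)) * ((k : ℝ) / n) * mixupDensity d σ k P z := by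
  subst hn
  obtain ⟨j, rfl⟩ := Nat.exists_eq_add_of_le' hk1
  have hj : j < #P := hkn
  have weight_nonneg : 0 ≤ ((j + 1 : ℕ) : ℝ)⁻¹ := by positivity
  have exponent : r / ((j + 1 : ℕ) * σ) = ((j + 1 : ℕ) : ℝ)⁻¹ * r / σ := by field_simp
  have fraction_nonneg : 0 ≤ ((j + 1 : ℕ) : ℝ) / (#P + 1 : ℕ) := by positivity
  rw [Nat.add_sub_cancel, inv_choose_succ_mul_sum_powersetCard, mixupDensity_eq_expect, exponent,
    mul_comm (Real.exp (-_)), mul_comm (Real.exp (_ / _)), mul_assoc, mul_assoc]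
  refine ⟨mul_le_mul_of_nonneg_left ?_ fraction_nonneg,
    mul_le_mul_of_nonneg_left ?_ fraction_nonneg⟩
  · rw [Real.exp_neg, inv_mul_le_iff₀ (Real.exp_pos _)]
    exact expect_laplacianDensity_le_add hσ weight_nonneg hx₀ hj z
  · exact expect_laplacianDensity_add_le hσ weight_nonneg hx₀ hj z

/-- If `D` has ℓ¹ diameter at most 1, the x₀-containing part `p₁` of the mixup-plus-noise
density of `D` satisfies
`exp(−1/(kσ))·(k/n)·q(z) ≤ p₁(z) ≤ exp(1/(kσ))·(k/n)·q(z)`. -/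
theorem mixup_density_x0_part_two_sided_bound
    (d : ℕ) (hd : 1 ≤ d) (σ : ℝ) (hσ : 0 < σ)
    (D : Finset (Fin d → ℝ)) (n : ℕ) (hn : D.card = n)
    (hdiam : ∀ x ∈ D, ∀ y ∈ D, ∑ i, |x i - y i| ≤ 1)
    (x₀ : Fin d → ℝ) (hx₀ : x₀ ∈ D)
    (k : ℕ) (hk1 : 1 ≤ k) (hkn : k ≤ n - 1)
    (z : Fin d → ℝ) :
    Real.exp (-(1 / (k * σ))) * ((k : ℝ) / n) * mixupDensity d σ k (D.erase x₀) z
        ≤ ((n.choose k : ℝ))⁻¹ *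
            ∑ S' ∈ (D.erase x₀).powersetCard (k - 1),
              laplacianDensity d σ (z - (k : ℝ)⁻¹ • (x₀ + ∑ x ∈ S', x)) ∧
    ((n.choose k : ℝ))⁻¹ *
        ∑ S' ∈ (D.erase x₀).powersetCard (k - 1),
          laplacianDensity d σ (z - (k : ℝ)⁻¹ • (x₀ + ∑ x ∈ S', x))
      ≤ Real.exp (1 / (k * σ)) * ((k : ℝ) / n) * mixupDensity d σ k (D.erase x₀) z :=
  mixup_density_x0_part_two_sided_bound_general hσ ((card_erase_add_one hx₀).trans hn)
    (fun y hy ↦ hdiam x₀ hx₀ y (mem_of_mem_erase hy)) hk1 hkn z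
end

section
/- (Group privacy.) Let μ₀, μ₁, …, μ_l be probability measures on a measurable space Ω, let ε > 0 and δ ≥ 0, and suppose that for each i < l and every measurable U ⊆ Ω, μ_i(U) ≤ e^ε·μ_{i+1}(U) + δ and μ_{i+1}(U) ≤ e^ε·μ_i(U) + δ. Then for every measurable U ⊆ Ω, μ₀(U) ≤ e^{lε}·μ_l(U) + δ·(e^{lε} − 1)/(e^ε − 1) and μ_l(U) ≤ e^{lε}·μ₀(U) + δ·(e^{lε} − 1)/(e^ε − 1). -/
open MeasureTheory

/-!
For a fixed event the masses of the measures form a finite sequence of numbers in which each term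
is at most `c` times its neighbour plus `d`. Iterating this affine bound from either end of the
chain multiplies the mass by `c ^ l` and accumulates `1 + c + ⋯ + c ^ (l - 1)` copies of `d`, a
geometric sum.
-/

section AffineRecurrence

variable {R : Type*} [Semiring R] [PartialOrder R] [IsOrderedRing R] {c d : R} {u : ℕ → R} {n : ℕ}

theorem le_pow_mul_add_geom_sum_mul_of_succ_le (hc : 0 ≤ c)
    (h : ∀ i < n, u (i + 1) ≤ c * u i + d) :
    u n ≤ c ^ n * u 0 + (∑ i ∈ Finset.range n, c ^ i) * d := by
  induction n with
  | zero => simp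
  | succ n ih =>
    calc
      u (n + 1) ≤ c * u n + d := h n n.lt_succ_self
      _ ≤ c * (c ^ n * u 0 + (∑ i ∈ Finset.range n, c ^ i) * d) + d := by
        gcongr
        exact ih fun i hi => h i (hi.trans n.lt_succ_self)
      _ = c ^ (n + 1) * u 0 + (∑ i ∈ Finset.range (n + 1), c ^ i) * d := by
        rw [geom_sum_succ, pow_succ', mul_add, add_mul, one_mul, mul_assoc, mul_assoc, add_assoc]

theorem le_pow_mul_add_geom_sum_mul_of_le_succ (hc : 0 ≤ c)
    (h : ∀ i < n, u i ≤ c * u (i + 1) + d) :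
    u 0 ≤ c ^ n * u n + (∑ i ∈ Finset.range n, c ^ i) * d := by
  induction n with
  | zero => simp
  | succ n ih =>
    calc
      u 0 ≤ c ^ n * u n + (∑ i ∈ Finset.range n, c ^ i) * d :=
        ih fun i hi => h i (hi.trans n.lt_succ_self)
      _ ≤ c ^ n * (c * u (n + 1) + d) + (∑ i ∈ Finset.range n, c ^ i) * d := by
        gcongr
        exact h n n.lt_succ_self
      _ = c ^ (n + 1) * u (n + 1) + (∑ i ∈ Finset.range (n + 1), c ^ i) * d := by
        rw [geom_sum_succ', pow_succ, mul_add, add_mul, mul_assoc, add_assoc]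

end AffineRecurrence

theorem ofReal_exp_pow (x : ℝ) (n : ℕ) :
    ENNReal.ofReal (Real.exp x) ^ n = ENNReal.ofReal (Real.exp (n * x)) := by
  rw [← ENNReal.ofReal_pow (Real.exp_nonneg x), ← Real.exp_nat_mul]

theorem geom_sum_ofReal {x : ℝ} (hx₀ : 0 ≤ x) (hx₁ : x ≠ 1) (n : ℕ) :
    ∑ i ∈ Finset.range n, ENNReal.ofReal x ^ i = ENNReal.ofReal ((x ^ n - 1) / (x - 1)) := by
  rw [← geom_sum_eq hx₁, ENNReal.ofReal_sum_of_nonneg fun i _ => pow_nonneg hx₀ i]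
  simp only [ENNReal.ofReal_pow hx₀]

theorem geom_sum_ofReal_exp_mul_ofReal {ε δ : ℝ} (hε : ε ≠ 0) (hδ : 0 ≤ δ) (n : ℕ) :
    (∑ i ∈ Finset.range n, ENNReal.ofReal (Real.exp ε) ^ i) * ENNReal.ofReal δ =
      ENNReal.ofReal (δ * (Real.exp (n * ε) - 1) / (Real.exp ε - 1)) := by
  rw [geom_sum_ofReal (Real.exp_nonneg ε) (mt (Real.exp_eq_one_iff ε).mp hε), mul_comm,
    ← ENNReal.ofReal_mul hδ, ← Real.exp_nat_mul, mul_div_assoc]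

theorem group_privacy_general {Ω : Type*} [MeasurableSpace Ω] (l : ℕ) (μ : ℕ → Measure Ω)
    (c d : ENNReal)
    (h₁ : ∀ i < l, ∀ U : Set Ω, MeasurableSet U → μ i U ≤ c * μ (i + 1) U + d)
    (h₂ : ∀ i < l, ∀ U : Set Ω, MeasurableSet U → μ (i + 1) U ≤ c * μ i U + d)
    (U : Set Ω) (hU : MeasurableSet U) :
    μ 0 U ≤ c ^ l * μ l U + (∑ i ∈ Finset.range l, c ^ i) * d ∧
      μ l U ≤ c ^ l * μ 0 U + (∑ i ∈ Finset.range l, c ^ i) * d :=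
  ⟨le_pow_mul_add_geom_sum_mul_of_le_succ (u := (μ · U)) zero_le fun i hi => h₁ i hi U hU,
    le_pow_mul_add_geom_sum_mul_of_succ_le (u := (μ · U)) zero_le fun i hi => h₂ i hi U hU⟩

/-- Group privacy: if consecutive measures in a chain `μ₀, …, μ_l` satisfy two-sided
(ε, δ)-differential privacy, then the endpoints satisfy
(lε, δ·(e^{lε} − 1)/(e^ε − 1))-differential privacy, in both directions. -/
theorem group_privacy
    {Ω : Type*} [MeasurableSpace Ω]
    (l : ℕ) (hl : 1 ≤ l)
    (μ : ℕ → Measure Ω) (hprob : ∀ i ≤ l, IsProbabilityMeasure (μ i))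
    (ε δ : ℝ) (hε : 0 < ε) (hδ : 0 ≤ δ)
    (h₁ : ∀ i < l, ∀ U : Set Ω, MeasurableSet U →
      μ i U ≤ ENNReal.ofReal (Real.exp ε) * μ (i + 1) U + ENNReal.ofReal δ)
    (h₂ : ∀ i < l, ∀ U : Set Ω, MeasurableSet U →
      μ (i + 1) U ≤ ENNReal.ofReal (Real.exp ε) * μ i U + ENNReal.ofReal δ)
    (U : Set Ω) (hU : MeasurableSet U) :
    μ 0 U ≤ ENNReal.ofReal (Real.exp (l * ε)) * μ l U +
        ENNReal.ofReal (δ * (Real.exp (l * ε) - 1) / (Real.exp ε - 1)) ∧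
    μ l U ≤ ENNReal.ofReal (Real.exp (l * ε)) * μ 0 U +
        ENNReal.ofReal (δ * (Real.exp (l * ε) - 1) / (Real.exp ε - 1)) := by
  rw [← geom_sum_ofReal_exp_mul_ofReal hε.ne' hδ, ← ofReal_exp_pow]
  exact group_privacy_general l μ _ _ h₁ h₂ U hU
end

section
/- Let μ and ν be probability measures on a measurable space Ω, let ε, δ ≥ 0, and suppose μ(U) ≤ e^ε · ν(U) + δ for every measurable U ⊆ Ω. Then for every measurable C : Ω → ℝ with 0 ≤ C ≤ B, the attack cost under ν is bounded below: ∫ C dν ≥ e^{−ε}·(∫ C dμ − B·δ). -/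
open MeasureTheory

/-!
The layer-cake formula writes the expected cost as the integral of the tail `t ↦ μ {t ≤ C}`, which
vanishes for `t > B`. Integrating the privacy inequality for the superlevel sets `{t ≤ C}` over
`0 < t ≤ B` therefore costs the additive error `δ` only `B` times.
-/

section

variable {Ω : Type*} [MeasurableSpace Ω] {μ ν : Measure Ω} {f : Ω → ℝ} {b : ℝ}

theorem lintegral_ofReal_eq_lintegral_Ioc_meas_le (hf : AEMeasurable f μ)
    (hf₀ : 0 ≤ᵐ[μ] f) (hfb : ∀ᵐ ω ∂μ, f ω ≤ b) :
    ∫⁻ ω, ENNReal.ofReal (f ω) ∂μ = ∫⁻ t in Set.Ioc 0 b, μ {ω | t ≤ f ω} := by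
  have support_subset : (fun t ↦ μ {ω | t ≤ f ω}).support ⊆ Set.Iic b := fun t ht ↦
    not_lt.mp fun hbt ↦ ht <| measure_eq_zero_iff_ae_notMem.mpr <|
      hfb.mono fun ω hω ↦ not_le.mpr (hω.trans_lt hbt)
  rw [lintegral_eq_lintegral_meas_le μ hf₀ hf, ← setLIntegral_eq_of_support_subset support_subset,
    Measure.restrict_restrict measurableSet_Iic, Set.inter_comm, Set.Ioi_inter_Iic]

theorem lintegral_ofReal_le_mul_lintegral_add_of_forall_measure_le {k d : ENNReal}
    (h : ∀ U, MeasurableSet U → μ U ≤ k * ν U + d) (hf : Measurable f)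
    (hμ₀ : 0 ≤ᵐ[μ] f) (hν₀ : 0 ≤ᵐ[ν] f) (hfb : ∀ᵐ ω ∂μ, f ω ≤ b) :
    ∫⁻ ω, ENNReal.ofReal (f ω) ∂μ
      ≤ k * ∫⁻ ω, ENNReal.ofReal (f ω) ∂ν + ENNReal.ofReal b * d := by
  have antitone_tail : Antitone fun t ↦ ν {ω | t ≤ f ω} :=
    fun s t hst ↦ measure_mono fun ω (hω : t ≤ f ω) ↦ hst.trans hω
  calc ∫⁻ ω, ENNReal.ofReal (f ω) ∂μ
      = ∫⁻ t in Set.Ioc 0 b, μ {ω | t ≤ f ω} :=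
        lintegral_ofReal_eq_lintegral_Ioc_meas_le hf.aemeasurable hμ₀ hfb
    _ ≤ ∫⁻ t in Set.Ioc 0 b, (k * ν {ω | t ≤ f ω} + d) :=
        lintegral_mono fun t ↦ h _ (measurableSet_le measurable_const hf)
    _ = k * (∫⁻ t in Set.Ioc 0 b, ν {ω | t ≤ f ω}) + ENNReal.ofReal b * d := by
        rw [lintegral_add_right _ measurable_const, lintegral_const_mul _ antitone_tail.measurable,
          setLIntegral_const, Real.volume_Ioc, sub_zero, mul_comm d]
    _ ≤ k * (∫⁻ t in Set.Ioi 0, ν {ω | t ≤ f ω}) + ENNReal.ofReal b * d := by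
        gcongr
        exact Set.Ioc_subset_Ioi_self
    _ = k * ∫⁻ ω, ENNReal.ofReal (f ω) ∂ν + ENNReal.ofReal b * d := by
        rw [lintegral_eq_lintegral_meas_le ν hν₀ hf.aemeasurable]

theorem integral_le_mul_integral_add_of_forall_measure_le {k d : ℝ}
    (hk : 0 ≤ k) (hd : 0 ≤ d) (hb : 0 ≤ b)
    (h : ∀ U, MeasurableSet U → μ U ≤ ENNReal.ofReal k * ν U + ENNReal.ofReal d)
    (hf : Measurable f) (hfν : Integrable f ν)
    (hμ₀ : 0 ≤ᵐ[μ] f) (hν₀ : 0 ≤ᵐ[ν] f) (hfb : ∀ᵐ ω ∂μ, f ω ≤ b) :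
    ∫ ω, f ω ∂μ ≤ k * ∫ ω, f ω ∂ν + b * d := by
  have hν_nonneg : 0 ≤ ∫ ω, f ω ∂ν := integral_nonneg_of_ae hν₀
  rw [integral_eq_lintegral_of_nonneg_ae hμ₀ hf.aestronglyMeasurable]
  refine ENNReal.toReal_le_of_le_ofReal (by positivity) ?_
  rw [ENNReal.ofReal_add (by positivity) (by positivity), ENNReal.ofReal_mul hk,
    ENNReal.ofReal_mul hb, ofReal_integral_eq_lintegral_ofReal hfν hν₀]
  exact lintegral_ofReal_le_mul_lintegral_add_of_forall_measure_le h hf hμ₀ hν₀ hfb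

end

theorem dp_attack_cost_lower_bound_general
    {Ω : Type*} [MeasurableSpace Ω] {μ ν : Measure Ω} {ε δ B : ℝ} (hδ : 0 ≤ δ)
    (h : ∀ U : Set Ω, MeasurableSet U →
      μ U ≤ ENNReal.ofReal (Real.exp ε) * ν U + ENNReal.ofReal δ)
    (hB : 0 ≤ B) {C : Ω → ℝ} (hC : Measurable C) (hCν : Integrable C ν)
    (hμ₀ : 0 ≤ᵐ[μ] C) (hν₀ : 0 ≤ᵐ[ν] C) (hCB : ∀ᵐ ω ∂μ, C ω ≤ B) :
    Real.exp (-ε) * ((∫ ω, C ω ∂μ) - B * δ) ≤ ∫ ω, C ω ∂ν := by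
  rw [Real.exp_neg, inv_mul_le_iff₀ (Real.exp_pos ε), sub_le_iff_le_add]
  exact integral_le_mul_integral_add_of_forall_measure_le (Real.exp_pos ε).le hδ hB h hC hCν
    hμ₀ hν₀ hCB

/-- If `μ(U) ≤ e^ε·ν(U) + δ` for every measurable `U`, then for every measurable
`C : Ω → ℝ` with `0 ≤ C ≤ B`, the attack cost under `ν` is bounded below:
`∫ C dν ≥ e^{−ε}·(∫ C dμ − B·δ)`. -/
theorem dp_attack_cost_lower_bound
    {Ω : Type*} [MeasurableSpace Ω]
    (μ ν : Measure Ω) [IsProbabilityMeasure μ] [IsProbabilityMeasure ν]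
    (ε δ : ℝ) (hε : 0 ≤ ε) (hδ : 0 ≤ δ)
    (h : ∀ U : Set Ω, MeasurableSet U →
      μ U ≤ ENNReal.ofReal (Real.exp ε) * ν U + ENNReal.ofReal δ)
    (B : ℝ) (hB : 0 ≤ B)
    (C : Ω → ℝ) (hC : Measurable C) (hC0 : ∀ ω, 0 ≤ C ω) (hCB : ∀ ω, C ω ≤ B) :
    Real.exp (-ε) * ((∫ ω, C ω ∂μ) - B * δ) ≤ ∫ ω, C ω ∂ν :=
  dp_attack_cost_lower_bound_general hδ h hB hC
    (.of_mem_Icc 0 B hC.aemeasurable (.of_forall fun ω ↦ ⟨hC0 ω, hCB ω⟩))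
    (.of_forall hC0) (.of_forall hC0) (.of_forall hCB)
end

section
/- (Theorem 1, nonnegative cost.) Let μ₀, μ₁, …, μ_l be probability measures on a measurable space Ω, let ε > 0 and δ ≥ 0, and suppose that for each i < l and every measurable U ⊆ Ω, μ_i(U) ≤ e^ε·μ_{i+1}(U) + δ and μ_{i+1}(U) ≤ e^ε·μ_i(U) + δ. Let C : Ω → ℝ be measurable with 0 ≤ C ≤ B, and write J(μ) = ∫ C dμ. Then the cost after l poisoning modifications satisfies J(μ_l) ≥ max{ e^{−lε}·( J(μ₀) + B·δ/(e^ε − 1) ) − B·δ/(e^ε − 1), 0 }. -/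
open MeasureTheory

/-!
One-sided approximate domination `μ U ≤ c * ν U + d` composes along a chain, and the additive
errors add up to a geometric sum. It passes from events to expectations of functions with values in
`[0, B]` by the layer cake formula: the superlevel sets `{t ≤ f}` are empty for `t > B`, so the
error `d` is paid only on an interval of length `B`.
-/

open scoped NNReal

/-- One half of `(ε, δ)`-indistinguishability of `μ` and `ν`, with `c` in the role of `e ^ ε` and
`d` in that of `δ`. Differential privacy of a mechanism asks for it in both directions between its
output laws on neighbouring datasets. -/
def ApproxDominated {Ω : Type*} [MeasurableSpace Ω] (c d : ℝ≥0) (μ ν : Measure Ω) : Prop :=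
  ∀ U : Set Ω, MeasurableSet U → μ U ≤ c * ν U + d

namespace ApproxDominated

variable {Ω : Type*} [MeasurableSpace Ω] {c d : ℝ≥0} {μ ν : Measure Ω}

lemma refl (μ : Measure Ω) : ApproxDominated 1 0 μ μ := fun U _ ↦ by simp

lemma trans {c' d' : ℝ≥0} {ρ : Measure Ω} (hμν : ApproxDominated c d μ ν)
    (hνρ : ApproxDominated c' d' ν ρ) : ApproxDominated (c * c') (c * d' + d) μ ρ := by
  intro U hU
  calc μ U ≤ c * ν U + d := hμν U hU
    _ ≤ c * (c' * ρ U + d') + d := by gcongr; exact hνρ U hU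
    _ = ↑(c * c') * ρ U + ↑(c * d' + d) := by push_cast; ring

lemma of_chain {μ : ℕ → Measure Ω} {l : ℕ}
    (h : ∀ i < l, ApproxDominated c d (μ i) (μ (i + 1))) :
    ApproxDominated (c ^ l) (d * ∑ i ∈ Finset.range l, c ^ i) (μ 0) (μ l) := by
  induction l with
  | zero => simpa using refl (μ 0)
  | succ k ih =>
    have hk := (ih fun i hi ↦ h i (hi.trans k.lt_succ_self)).trans (h k k.lt_succ_self)
    convert hk using 1
    · exact pow_succ c k
    · rw [Finset.sum_range_succ]
      ring

variable {f : Ω → ℝ} {B : ℝ}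

lemma lintegral_ofReal_le (h : ApproxDominated c d μ ν) (hf : Measurable f) (hf0 : 0 ≤ f)
    (hfB : ∀ ω, f ω ≤ B) :
    ∫⁻ ω, ENNReal.ofReal (f ω) ∂μ
      ≤ c * ∫⁻ ω, ENNReal.ofReal (f ω) ∂ν + d * ENNReal.ofReal B := by
  have layer_cake (ρ : Measure Ω) :
      ∫⁻ ω, ENNReal.ofReal (f ω) ∂ρ = ∫⁻ t in Set.Ioi 0, ρ {ω | t ≤ f ω} :=
    lintegral_eq_lintegral_meas_le ρ (.of_forall hf0) hf.aemeasurable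
  have superlevel_le (t : ℝ) :
      μ {ω | t ≤ f ω} ≤ c * ν {ω | t ≤ f ω} + (Set.Iic B).indicator (fun _ ↦ (d : ENNReal)) t := by
    by_cases ht : t ≤ B
    · rw [Set.indicator_of_mem (Set.mem_Iic.2 ht)]
      exact h _ (measurableSet_le measurable_const hf)
    · have hempty : {ω | t ≤ f ω} = ∅ :=
        Set.eq_empty_of_forall_notMem fun ω hω ↦ ht (hω.trans (hfB ω))
      simp [hempty]
  have error_eq : ∫⁻ t in Set.Ioi 0, (Set.Iic B).indicator (fun _ ↦ (d : ENNReal)) t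
      = d * ENNReal.ofReal B := by
    rw [lintegral_indicator_const measurableSet_Iic, Measure.restrict_apply measurableSet_Iic,
      Set.Iic_inter_Ioi, Real.volume_Ioc, sub_zero]
  rw [layer_cake μ, layer_cake ν, ← error_eq, ← lintegral_const_mul' _ _ ENNReal.coe_ne_top,
    ← lintegral_add_right _ (measurable_const.indicator measurableSet_Iic)]
  exact lintegral_mono superlevel_le

lemma integral_le [IsFiniteMeasure ν] (h : ApproxDominated c d μ ν) (hf : Measurable f)
    (hf0 : 0 ≤ f) (hB : 0 ≤ B) (hfB : ∀ ω, f ω ≤ B) :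
    ∫ ω, f ω ∂μ ≤ c * ∫ ω, f ω ∂ν + d * B := by
  have integral_eq (ρ : Measure Ω) :
      ∫ ω, f ω ∂ρ = (∫⁻ ω, ENNReal.ofReal (f ω) ∂ρ).toReal :=
    integral_eq_lintegral_of_nonneg_ae (.of_forall hf0) hf.aestronglyMeasurable
  have hint : Integrable f ν :=
    .of_bound hf.aestronglyMeasurable B <| .of_forall fun ω ↦ by
      simpa only [Real.norm_of_nonneg (hf0 ω)] using hfB ω
  have hν : c * ∫⁻ ω, ENNReal.ofReal (f ω) ∂ν ≠ ⊤ :=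
    ENNReal.mul_ne_top ENNReal.coe_ne_top hint.lintegral_lt_top.ne
  have herror : d * ENNReal.ofReal B ≠ ⊤ :=
    ENNReal.mul_ne_top ENNReal.coe_ne_top ENNReal.ofReal_ne_top
  have hle := ENNReal.toReal_mono (ENNReal.add_ne_top.2 ⟨hν, herror⟩)
    (h.lintegral_ofReal_le hf hf0 hfB)
  rwa [ENNReal.toReal_add hν herror, ENNReal.toReal_mul, ENNReal.toReal_mul,
    ENNReal.toReal_ofReal hB, ENNReal.coe_toReal, ENNReal.coe_toReal, ← integral_eq,
    ← integral_eq] at hle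

end ApproxDominated

theorem poisoning_cost_lower_bound_nonneg_general
    {Ω : Type*} [MeasurableSpace Ω]
    (l : ℕ) (μ : ℕ → Measure Ω) [IsFiniteMeasure (μ l)]
    (ε δ : ℝ) (hε : ε ≠ 0) (hδ : 0 ≤ δ)
    (h : ∀ i < l, ∀ U : Set Ω, MeasurableSet U →
      μ i U ≤ ENNReal.ofReal (Real.exp ε) * μ (i + 1) U + ENNReal.ofReal δ)
    (B : ℝ) (hB : 0 ≤ B)
    (C : Ω → ℝ) (hC : Measurable C) (hC0 : ∀ ω, 0 ≤ C ω) (hCB : ∀ ω, C ω ≤ B) :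
    max (Real.exp (-(l * ε)) * ((∫ ω, C ω ∂(μ 0)) + B * δ / (Real.exp ε - 1))
          - B * δ / (Real.exp ε - 1)) 0
      ≤ ∫ ω, C ω ∂(μ l) := by
  refine max_le ?_ (integral_nonneg hC0)
  have hdom : ApproxDominated _ _ (μ 0) (μ l) :=
    .of_chain (c := (Real.exp ε).toNNReal) (d := δ.toNNReal) h
  have hcost : ∫ ω, C ω ∂(μ 0) ≤ Real.exp ε ^ l * ∫ ω, C ω ∂(μ l)
      + δ * (∑ i ∈ Finset.range l, Real.exp ε ^ i) * B := by
    simpa [hδ, Real.exp_nonneg] using hdom.integral_le hC hC0 hB hCB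
  have hgeom : δ * (∑ i ∈ Finset.range l, Real.exp ε ^ i) * B
      = B * δ / (Real.exp ε - 1) * (Real.exp ε ^ l - 1) := by
    rw [geom_sum_eq (mt (Real.exp_eq_one_iff ε).1 hε)]
    ring
  rw [sub_le_iff_le_add, Real.exp_neg, Real.exp_nat_mul, inv_mul_le_iff₀ (by positivity)]
  linarith

/-- Theorem 1 (nonnegative cost): for a chain `μ₀, …, μ_l` of probability measures in
which consecutive pairs satisfy two-sided (ε, δ)-differential privacy, and a measurable
cost `0 ≤ C ≤ B` with expected cost `J(μ) = ∫ C dμ`, the cost after `l` poisoning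
modifications satisfies
`J(μ_l) ≥ max{ e^{−lε}·(J(μ₀) + B·δ/(e^ε − 1)) − B·δ/(e^ε − 1), 0 }`. -/
theorem poisoning_cost_lower_bound_nonneg
    {Ω : Type*} [MeasurableSpace Ω]
    (l : ℕ) (hl : 1 ≤ l)
    (μ : ℕ → Measure Ω) (hprob : ∀ i ≤ l, IsProbabilityMeasure (μ i))
    (ε δ : ℝ) (hε : 0 < ε) (hδ : 0 ≤ δ)
    (h₁ : ∀ i < l, ∀ U : Set Ω, MeasurableSet U →
      μ i U ≤ ENNReal.ofReal (Real.exp ε) * μ (i + 1) U + ENNReal.ofReal δ)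
    (h₂ : ∀ i < l, ∀ U : Set Ω, MeasurableSet U →
      μ (i + 1) U ≤ ENNReal.ofReal (Real.exp ε) * μ i U + ENNReal.ofReal δ)
    (B : ℝ) (hB : 0 ≤ B)
    (C : Ω → ℝ) (hC : Measurable C) (hC0 : ∀ ω, 0 ≤ C ω) (hCB : ∀ ω, C ω ≤ B) :
    max (Real.exp (-(l * ε)) * ((∫ ω, C ω ∂(μ 0)) + B * δ / (Real.exp ε - 1))
          - B * δ / (Real.exp ε - 1)) 0
      ≤ ∫ ω, C ω ∂(μ l) := by
  have := hprob l le_rfl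
  exact poisoning_cost_lower_bound_nonneg_general l μ ε δ hε.ne' hδ h₁ B hB C hC hC0 hCB
end
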